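/- Suppose k ≥ 2 and k' ≥ 2, and e₁,…,e_k and e'₁,…,e'_{k'} are integers with all e_i ≥ 2, all e'_i ≥ 2, some e_j ≥ 3, and some e'_j ≥ 3. If B(e₁−1, e₂, …, e_{k−1}, e_k−1) = B(e'₁−1, e'₂, …, e'_{k'−1}, e'_{k'}−1), then k = k' and e_i = e'_i for all i. -/

import Mathlib

/-- The matrix `[[0,-1],[1,x]]`. -/
def Mb (x : ℤ) : Matrix (Fin 2) (Fin 2) ℤ := !![0, -1; 1, x]

/-- The product `[[0,-1],[1,b_k]] ⋯ [[0,-1],[1,b₁]]` for a list `[b₁,…,b_k]`. -/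
def prodB (L : List ℤ) : Matrix (Fin 2) (Fin 2) ℤ := ((L.map Mb).reverse).prod

/-- `B(b₁,…,b_k) = [[0,1],[-1,0]] · [[0,-1],[1,b_k]] ⋯ [[0,-1],[1,b₁]]`. -/
def Bmat (L : List ℤ) : Matrix (Fin 2) (Fin 2) ℤ := !![0, 1; -1, 0] * prodB L

/-- The list `e₁-1, e₂, …, e_{k-1}, e_k-1`. -/
def cuspList (k : ℕ) (e : Fin k → ℤ) : List ℤ :=
  List.ofFn fun i => e i - (if i.val = 0 ∨ i.val = k - 1 then 1 else 0)

theorem prodB_cons (x : ℤ) (L : List ℤ) : prodB (x :: L) = prodB L * Mb x := by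
  simp [prodB]

theorem prodB_concat (L : List ℤ) (x : ℤ) : prodB (L ++ [x]) = Mb x * prodB L := by
  simp [prodB]

theorem prodB_cons_one_zero (x : ℤ) (L : List ℤ) : prodB (x :: L) 1 0 = prodB L 1 1 := by
  simp [prodB_cons, Mb, Matrix.mul_apply, Fin.sum_univ_two]

theorem prodB_cons_one_one (x : ℤ) (L : List ℤ) :
    prodB (x :: L) 1 1 = x * prodB L 1 1 - prodB L 1 0 := by
  simp [prodB_cons, Mb, Matrix.mul_apply, Fin.sum_univ_two]
  ring

theorem prodB_bottom_row_bounds (L : List ℤ) (hL : ∀ x ∈ L, 2 ≤ x) :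
    0 ≤ prodB L 1 0 ∧ prodB L 1 0 < prodB L 1 1 := by
  induction L with
  | nil => simp [prodB]
  | cons x L ih =>
    obtain ⟨h0, h1⟩ := ih fun y hy => hL y (List.mem_cons_of_mem x hy)
    have hx : 2 ≤ x := hL x List.mem_cons_self
    rw [prodB_cons_one_zero, prodB_cons_one_one]
    constructor <;> nlinarith

/-- A list of integers `≥ 2` is determined by the bottom row of its product: this is uniqueness of
negative continued fraction expansions. -/
theorem eq_of_prodB_bottom_row_eq (L L' : List ℤ) (hL : ∀ x ∈ L, 2 ≤ x) (hL' : ∀ x ∈ L', 2 ≤ x)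
    (h0 : prodB L 1 0 = prodB L' 1 0) (h1 : prodB L 1 1 = prodB L' 1 1) : L = L' := by
  induction L generalizing L' with
  | nil =>
    cases L' with
    | nil => rfl
    | cons y L' =>
      have hb := prodB_bottom_row_bounds L' fun z hz => hL' z (List.mem_cons_of_mem y hz)
      rw [prodB_cons_one_zero] at h0
      simp [prodB] at h0 hb
      omega
  | cons x L ih =>
    have hLt : ∀ z ∈ L, 2 ≤ z := fun z hz => hL z (List.mem_cons_of_mem x hz)
    have hb := prodB_bottom_row_bounds L hLt
    cases L' with
    | nil =>
      rw [prodB_cons_one_zero] at h0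
      simp [prodB] at h0 hb
      omega
    | cons y L' =>
      have hLt' : ∀ z ∈ L', 2 ≤ z := fun z hz => hL' z (List.mem_cons_of_mem y hz)
      have hb' := prodB_bottom_row_bounds L' hLt'
      rw [prodB_cons_one_zero, prodB_cons_one_zero] at h0
      rw [prodB_cons_one_one, prodB_cons_one_one, ← h0] at h1
      rw [← h0] at hb'
      have hxy : x = y := by
        rcases lt_trichotomy x y with h | h | h
        · nlinarith
        · exact h
        · nlinarith
      subst hxy
      rw [ih L' hLt hLt' (by linarith) h0]

theorem ofFn_eq_cons_append_last {α : Type*} (n : ℕ) (f : Fin (n + 2) → α) :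
    List.ofFn f =
      f 0 :: (List.ofFn (fun i : Fin n => f i.castSucc.succ) ++ [f (Fin.last (n + 1))]) := by
  rw [List.ofFn_succ, List.ofFn_succ', List.concat_eq_append, Fin.succ_last]

theorem prodB_ofFn_eq_mul_Bmat_cuspList_mul (k : ℕ) (hk : 2 ≤ k) (e : Fin k → ℤ) :
    prodB (List.ofFn e) = !![0, -1; 1, 1] * Bmat (cuspList k e) * !![1, 1; 0, 1] := by
  obtain ⟨n, rfl⟩ := Nat.exists_eq_add_of_le' hk
  have hmid : ∀ i : Fin n, i.val ≠ n := fun i => i.isLt.ne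
  rw [Bmat, cuspList, ofFn_eq_cons_append_last, ofFn_eq_cons_append_last]
  simp only [prodB_cons, prodB_concat]
  simp only [Fin.val_succ, Fin.val_castSucc, Fin.val_last, Fin.val_zero]
  simp only [Nat.add_right_cancel_iff, Nat.add_one_ne_zero, hmid,
    Nat.reduceSubDiff, or_self, or_true, true_or, if_true, if_false, sub_zero]
  generalize prodB _ = P
  have hfirst : Mb (e 0) = Mb (e 0 - 1) * !![1, 1; 0, 1] := by
    simp [Mb]
  have hlast : Mb (e (Fin.last (n + 1))) =
      !![0, -1; 1, 1] * (!![0, 1; -1, 0] * Mb (e (Fin.last (n + 1)) - 1)) := by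
    simp [Mb]
  rw [hfirst, hlast]
  simp only [Matrix.mul_assoc]

theorem stmt_4 (k k' : ℕ) (hk : 2 ≤ k) (hk' : 2 ≤ k')
    (e : Fin k → ℤ) (e' : Fin k' → ℤ)
    (he : ∀ i, 2 ≤ e i) (he' : ∀ i, 2 ≤ e' i)
    (h3 : ∃ j, 3 ≤ e j) (h3' : ∃ j, 3 ≤ e' j)
    (heq : Bmat (cuspList k e) = Bmat (cuspList k' e')) :
    k = k' ∧ ∀ (i : ℕ) (hi : i < k) (hi' : i < k'), e ⟨i, hi⟩ = e' ⟨i, hi'⟩ := by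
  have hprod : prodB (List.ofFn e) = prodB (List.ofFn e') := by
    rw [prodB_ofFn_eq_mul_Bmat_cuspList_mul k hk, prodB_ofFn_eq_mul_Bmat_cuspList_mul k' hk', heq]
  have hlist : List.ofFn e = List.ofFn e' :=
    eq_of_prodB_bottom_row_eq _ _ (by simpa [List.mem_ofFn] using he)
      (by simpa [List.mem_ofFn] using he') (by rw [hprod]) (by rw [hprod])
  obtain rfl : k = k' := by simpa using congrArg List.length hlist
  exact ⟨rfl, fun i hi _ => congrFun (List.ofFn_injective hlist) ⟨i, hi⟩⟩
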